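/- Let α ∈ ℝ_{>0}^K, let π be a Dirichlet(α)-distributed random vector, set α₀ = Σ_{j=1}^K α_j and p = α/α₀. Let y ∈ {0,1}^K be a one-hot vector. Then the Dirichlet-expected mean-squared-error loss satisfies 𝔼[Σ_{k=1}^K (y_k − π_k)²] = Σ_{k=1}^K (y_k − p_k)² + Σ_{k=1}^K p_k(1 − p_k)/(α₀ + 1). -/

import Mathlib

open MeasureTheory ProbabilityTheory

open Set Filter Topology
open scoped ENNReal

/-!
Weighting a Gamma distribution by `x ^ s * exp (t * x)` gives, up to a constant, another Gamma
distribution. Weighting independent Gamma variables `x i` by `∏ i, x i ^ s i` therefore only shifts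
their shapes, so that the sum of the weighted vector is still Gamma distributed, and the
normalizing factor `(∑ i, x i) ^ (-∑ i, s i)` has an explicit mean. This gives all mixed moments of
the Dirichlet distribution without computing its density. The first two moments of a coordinate
yield its mean `p k` and its variance `p k * (1 - p k) / (α₀ + 1)`, and the expected squared loss is
squared bias plus variance.
-/

section Gamma

variable {a r s t : ℝ}

lemma measurable_gammaPDF (a r : ℝ) : Measurable (gammaPDF a r) :=
  (measurable_gammaPDFReal a r).ennreal_ofReal

lemma ae_pos_gammaMeasure (a r : ℝ) : ∀ᵐ x ∂gammaMeasure a r, 0 < x := by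
  rw [gammaMeasure, ae_withDensity_iff (measurable_gammaPDF a r)]
  filter_upwards [Measure.ae_ne volume (0 : ℝ)] with x hx0 hx
  contrapose! hx
  exact gammaPDF_of_neg (hx.lt_of_ne hx0)

lemma gammaPDF_mul_rpow_mul_exp (ha : 0 < a) (has : 0 < a + s) (hr : 0 ≤ r) (htr : t < r)
    {x : ℝ} (hx : x ≠ 0) :
    gammaPDF a r x * ENNReal.ofReal (x ^ s * Real.exp (t * x)) =
      ENNReal.ofReal (Real.Gamma (a + s) / Real.Gamma a * (r ^ a / (r - t) ^ (a + s))) *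
        gammaPDF (a + s) (r - t) x := by
  rcases hx.lt_or_gt with hx | hx
  · simp [gammaPDF_of_neg hx]
  have hrt : 0 < r - t := sub_pos.2 htr
  have hpow : x ^ (a + s - 1) = x ^ (a - 1) * x ^ s := by
    rw [← Real.rpow_add hx, add_sub_right_comm]
  have hexp : Real.exp (-((r - t) * x)) = Real.exp (-(r * x)) * Real.exp (t * x) := by
    rw [← Real.exp_add]
    ring_nf
  have hΓ : Real.Gamma (a + s) ≠ 0 := (Real.Gamma_pos_of_pos has).ne'
  rw [gammaPDF_of_nonneg hx.le, gammaPDF_of_nonneg hx.le, ← ENNReal.ofReal_mul (by positivity),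
    ← ENNReal.ofReal_mul (by positivity), hpow, hexp]
  field_simp

lemma gammaMeasure_withDensity_rpow_mul_exp (ha : 0 < a) (has : 0 < a + s) (hr : 0 ≤ r)
    (htr : t < r) :
    (gammaMeasure a r).withDensity (fun x ↦ ENNReal.ofReal (x ^ s * Real.exp (t * x))) =
      ENNReal.ofReal (Real.Gamma (a + s) / Real.Gamma a * (r ^ a / (r - t) ^ (a + s))) •
        gammaMeasure (a + s) (r - t) := by
  rw [gammaMeasure, gammaMeasure, ← withDensity_mul _ (measurable_gammaPDF a r) (by fun_prop),
    ← withDensity_smul _ (measurable_gammaPDF _ _)]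
  refine withDensity_congr_ae ?_
  filter_upwards [Measure.ae_ne volume (0 : ℝ)] with x hx
  exact gammaPDF_mul_rpow_mul_exp ha has hr htr hx

lemma lintegral_rpow_mul_exp_gammaMeasure (ha : 0 < a) (has : 0 < a + s) (hr : 0 ≤ r)
    (htr : t < r) :
    ∫⁻ x, ENNReal.ofReal (x ^ s * Real.exp (t * x)) ∂gammaMeasure a r =
      ENNReal.ofReal (Real.Gamma (a + s) / Real.Gamma a * (r ^ a / (r - t) ^ (a + s))) := by
  have := isProbabilityMeasure_gammaMeasure has (sub_pos.2 htr)
  rw [← setLIntegral_univ, ← withDensity_apply _ .univ,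
    gammaMeasure_withDensity_rpow_mul_exp ha has hr htr]
  simp

lemma gammaMeasure_withDensity_rpow (ha : 0 < a) (has : 0 < a + s) (hr : 0 < r) :
    (gammaMeasure a r).withDensity (fun x ↦ ENNReal.ofReal (x ^ s)) =
      ENNReal.ofReal (Real.Gamma (a + s) / Real.Gamma a * r ^ (-s)) • gammaMeasure (a + s) r := by
  have h := gammaMeasure_withDensity_rpow_mul_exp ha has hr.le hr
  simpa [← Real.rpow_sub hr] using h

lemma lintegral_rpow_gammaMeasure (ha : 0 < a) (has : 0 < a + s) (hr : 0 < r) :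
    ∫⁻ x, ENNReal.ofReal (x ^ s) ∂gammaMeasure a r =
      ENNReal.ofReal (Real.Gamma (a + s) / Real.Gamma a * r ^ (-s)) := by
  have h := lintegral_rpow_mul_exp_gammaMeasure ha has hr.le hr
  simpa [← Real.rpow_sub hr] using h

lemma lintegral_exp_gammaMeasure (ha : 0 < a) (hr : 0 ≤ r) (htr : t < r) :
    ∫⁻ x, ENNReal.ofReal (Real.exp (t * x)) ∂gammaMeasure a r =
      ENNReal.ofReal ((r / (r - t)) ^ a) := by
  have h := lintegral_rpow_mul_exp_gammaMeasure (s := 0) ha (by simpa) hr htr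
  have hΓ : Real.Gamma a ≠ 0 := (Real.Gamma_pos_of_pos ha).ne'
  simpa [hΓ, Real.div_rpow hr (sub_pos.2 htr).le] using h

lemma integrable_exp_gammaMeasure (ha : 0 < a) (hr : 0 ≤ r) (htr : t < r) :
    Integrable (fun x ↦ Real.exp (t * x)) (gammaMeasure a r) := by
  refine (lintegral_ofReal_ne_top_iff_integrable (by fun_prop)
    (.of_forall fun x ↦ by positivity)).1 ?_
  simp [lintegral_exp_gammaMeasure ha hr htr]

lemma mgf_gammaMeasure (ha : 0 < a) (hr : 0 ≤ r) (htr : t < r) :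
    mgf id (gammaMeasure a r) t = (r / (r - t)) ^ a := by
  have : 0 < r - t := sub_pos.2 htr
  rw [mgf, integral_eq_lintegral_of_nonneg_ae (.of_forall fun x ↦ by positivity) (by fun_prop)]
  simp only [id]
  rw [lintegral_exp_gammaMeasure ha hr htr, ENNReal.toReal_ofReal (by positivity)]

lemma complexMGF_gammaMeasure (ha : 0 < a) (hr : 0 < r) {z : ℂ} (hz : z.re < r) :
    complexMGF id (gammaMeasure a r) z = (1 - z / r : ℂ) ^ (-a : ℂ) := by
  have hU : IsOpen {z : ℂ | z.re < r} := isOpen_lt Complex.continuous_re continuous_const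
  have hL : AnalyticOnNhd ℂ (complexMGF id (gammaMeasure a r)) {z | z.re < r} :=
    analyticOnNhd_complexMGF.mono fun z hz ↦
      interior_maximal (fun t ht ↦ integrable_exp_gammaMeasure ha hr.le ht) isOpen_Iio hz
  have hR : AnalyticOnNhd ℂ (fun z : ℂ ↦ (1 - z / r : ℂ) ^ (-a : ℂ)) {z | z.re < r} := by
    refine DifferentiableOn.analyticOnNhd (fun w hw ↦ ?_) hU
    have hw : 1 - w / r ∈ Complex.slitPlane := .inl <| by
      simpa [Complex.div_ofReal_re] using (div_lt_one hr).2 hw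
    have hd : DifferentiableAt ℂ (fun z : ℂ ↦ 1 - z / r) w := by fun_prop
    exact (hd.cpow_const hw).differentiableWithinAt
  have hofReal : Tendsto ((↑) : ℝ → ℂ) (𝓝[≠] 0) (𝓝[≠] 0) := by
    refine tendsto_nhdsWithin_iff.2
      ⟨(Complex.continuous_ofReal.tendsto' 0 0 rfl).mono_left inf_le_left, ?_⟩
    filter_upwards [self_mem_nhdsWithin] with t ht using by simpa using ht
  have hreal : ∀ᶠ t : ℝ in 𝓝[≠] 0,
      complexMGF id (gammaMeasure a r) t = (1 - t / r : ℂ) ^ (-a : ℂ) := by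
    filter_upwards [nhdsWithin_le_nhds (Iio_mem_nhds hr)] with t (ht : t < r)
    have : 0 < r - t := sub_pos.2 ht
    rw [complexMGF_ofReal, mgf_gammaMeasure ha hr.le ht, ← inv_div, Real.inv_rpow (by positivity),
      ← Real.rpow_neg (by positivity), Complex.ofReal_cpow (by positivity), sub_div,
      div_self hr.ne']
    push_cast
    rfl
  exact hL.eqOn_of_preconnected_of_frequently_eq hR (convex_halfSpace_re_lt r).isPreconnected
    (by simpa) (hofReal.frequently hreal.frequently) hz

lemma charFun_gammaMeasure (ha : 0 < a) (hr : 0 < r) (t : ℝ) :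
    charFun (gammaMeasure a r) t = (1 - t * Complex.I / r : ℂ) ^ (-a : ℂ) := by
  rw [← complexMGF_id_mul_I, complexMGF_gammaMeasure ha hr (by simpa)]

end Gamma

section Pi

variable {ι : Type*} [Fintype ι]

lemma map_sum_pi_gammaMeasure [Nonempty ι] {a : ι → ℝ} {r : ℝ} (ha : ∀ i, 0 < a i) (hr : 0 < r) :
    (Measure.pi fun i ↦ gammaMeasure (a i) r).map (fun x ↦ ∑ i, x i) =
      gammaMeasure (∑ i, a i) r := by
  have hsum : 0 < ∑ i, a i := Finset.sum_pos (fun i _ ↦ ha i) Finset.univ_nonempty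
  have := fun i ↦ isProbabilityMeasure_gammaMeasure (ha i) hr
  have := isProbabilityMeasure_gammaMeasure hsum hr
  have := Measure.isProbabilityMeasure_map
    (μ := Measure.pi fun i ↦ gammaMeasure (a i) r) (f := fun x ↦ ∑ i, x i) (by fun_prop)
  refine Measure.ext_of_charFun (funext fun t ↦ ?_)
  have hbase : (1 - t * Complex.I / r : ℂ) ≠ 0 := fun h ↦ by
    simpa [Complex.div_ofReal_re] using congrArg Complex.re h
  rw [charFun_map_sum_pi_eq_prod, Finset.prod_apply, charFun_gammaMeasure hsum hr]
  simp_rw [charFun_gammaMeasure (ha _) hr, Complex.cpow_def_of_ne_zero hbase]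
  rw [← Complex.exp_sum, ← Finset.mul_sum, Finset.sum_neg_distrib, Complex.ofReal_sum]

lemma measure_pi_withDensity_prod {X : ι → Type*} [∀ i, MeasurableSpace (X i)]
    {μ : ∀ i, Measure (X i)} [∀ i, IsProbabilityMeasure (μ i)] {f : ∀ i, X i → ℝ≥0∞}
    (hf : ∀ i, Measurable (f i)) [∀ i, SigmaFinite ((μ i).withDensity (f i))] :
    (Measure.pi μ).withDensity (fun x ↦ ∏ i, f i (x i)) =
      Measure.pi fun i ↦ (μ i).withDensity (f i) := by
  refine (Measure.pi_eq fun A hA ↦ ?_).symm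
  have hind (x : ∀ i, X i) : (univ.pi A).indicator (fun x ↦ ∏ i, f i (x i)) x =
      ∏ i, (A i).indicator (f i) (x i) := by
    by_cases hx : x ∈ univ.pi A
    · rw [indicator_of_mem hx]
      exact Finset.prod_congr rfl fun i _ ↦ (indicator_of_mem (hx i (mem_univ i)) _).symm
    · obtain ⟨i, hi⟩ : ∃ i, x i ∉ A i := by simpa [Set.mem_pi] using hx
      rw [indicator_of_notMem hx, Finset.prod_eq_zero (Finset.mem_univ i)]
      exact indicator_of_notMem hi _
  have hmeas (i : ι) : Measurable ((A i).indicator (f i)) := (hf i).indicator (hA i)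
  rw [withDensity_apply _ (.univ_pi hA), ← lintegral_indicator (.univ_pi hA)]
  simp_rw [hind]
  rw [lintegral_prod_eq_prod_lintegral_of_indepFun _ _ (iIndepFun_pi fun i ↦ (hmeas i).aemeasurable)
    fun i ↦ (hmeas i).comp (measurable_pi_apply i)]
  refine Finset.prod_congr rfl fun i _ ↦ ?_
  rw [withDensity_apply _ (hA i), ← lintegral_indicator (hA i),
    (measurePreserving_eval μ i).lintegral_comp (hmeas i)]

lemma measure_pi_smul {X : ι → Type*} [∀ i, MeasurableSpace (X i)] (c : ι → ℝ≥0∞)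
    (μ : ∀ i, Measure (X i)) [∀ i, SigmaFinite (μ i)] [∀ i, SigmaFinite (c i • μ i)] :
    Measure.pi (fun i ↦ c i • μ i) = (∏ i, c i) • Measure.pi μ :=
  Measure.pi_eq fun A _ ↦ by simp [Measure.pi_pi, Finset.prod_mul_distrib]

lemma pi_gammaMeasure_withDensity_prod_rpow {a s : ι → ℝ} (ha : ∀ i, 0 < a i)
    (has : ∀ i, 0 < a i + s i) {r : ℝ} (hr : 0 < r) :
    (Measure.pi fun i ↦ gammaMeasure (a i) r).withDensity
        (fun x ↦ ∏ i, ENNReal.ofReal (x i ^ s i)) =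
      (∏ i, ENNReal.ofReal (Real.Gamma (a i + s i) / Real.Gamma (a i) * r ^ (-s i))) •
        Measure.pi fun i ↦ gammaMeasure (a i + s i) r := by
  have := fun i ↦ isProbabilityMeasure_gammaMeasure (ha i) hr
  have := fun i ↦ isProbabilityMeasure_gammaMeasure (has i) hr
  have hfin (i : ι) : IsFiniteMeasure
      (ENNReal.ofReal (Real.Gamma (a i + s i) / Real.Gamma (a i) * r ^ (-s i)) •
        gammaMeasure (a i + s i) r) := Measure.smul_finite _ ENNReal.ofReal_ne_top
  rw [measure_pi_withDensity_prod (X := fun _ ↦ ℝ) (f := fun i x ↦ ENNReal.ofReal (x ^ s i))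
    fun i ↦ by fun_prop]
  simp_rw [gammaMeasure_withDensity_rpow (ha _) (has _) hr]
  exact measure_pi_smul _ _

lemma lintegral_prod_rpow_mul_comp_sum_pi_gammaMeasure [Nonempty ι] {a s : ι → ℝ}
    (ha : ∀ i, 0 < a i) (has : ∀ i, 0 < a i + s i) {r : ℝ} (hr : 0 < r) {f : ℝ → ℝ≥0∞}
    (hf : Measurable f) :
    ∫⁻ x, (∏ i, ENNReal.ofReal (x i ^ s i)) * f (∑ i, x i)
        ∂Measure.pi (fun i ↦ gammaMeasure (a i) r) =
      (∏ i, ENNReal.ofReal (Real.Gamma (a i + s i) / Real.Gamma (a i) * r ^ (-s i))) *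
        ∫⁻ u, f u ∂gammaMeasure (∑ i, (a i + s i)) r := by
  have hw : Measurable fun x : ι → ℝ ↦ ∏ i, ENNReal.ofReal (x i ^ s i) := by fun_prop
  have hfsum : Measurable fun x : ι → ℝ ↦ f (∑ i, x i) := by fun_prop
  rw [← map_sum_pi_gammaMeasure has hr, lintegral_map hf (by fun_prop), ← smul_eq_mul,
    ← lintegral_smul_measure, ← pi_gammaMeasure_withDensity_prod_rpow ha has hr,
    lintegral_withDensity_eq_lintegral_mul _ hw hfsum]
  rfl

end Pi

section Dirichlet

variable {ι : Type*} [Fintype ι] {a : ι → ℝ}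

/-- The Dirichlet distribution with parameter `a`: the law of a vector of independent
Gamma(`a i`, 1) variables divided by their sum. It is defined as a pushforward rather than by a
density because it is carried by the simplex, which is null for the volume of `ι → ℝ`. -/
noncomputable def dirichletMeasure (a : ι → ℝ) : Measure (ι → ℝ) :=
  (Measure.pi fun i ↦ gammaMeasure (a i) 1).map fun x i ↦ x i / ∑ j, x j

lemma isProbabilityMeasure_dirichletMeasure (ha : ∀ i, 0 < a i) :
    IsProbabilityMeasure (dirichletMeasure a) := by
  have := fun i ↦ isProbabilityMeasure_gammaMeasure (ha i) one_pos
  exact Measure.isProbabilityMeasure_map (by fun_prop)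

lemma hasLaw_dirichletMeasure {Ω : Type*} {mΩ : MeasurableSpace Ω} {μ : Measure Ω}
    {G : ι → Ω → ℝ} (hG : ∀ i, HasLaw (G i) (gammaMeasure (a i) 1) μ) (hindep : iIndepFun G μ) :
    HasLaw (fun ω i ↦ G i ω / ∑ j, G j ω) (dirichletMeasure a) μ :=
  have hnormalize : HasLaw (fun (x : ι → ℝ) i ↦ x i / ∑ j, x j) (dirichletMeasure a)
      (Measure.pi fun i ↦ gammaMeasure (a i) 1) := { map_eq := rfl }
  hnormalize.comp (hindep.hasLaw_pi hG)

lemma ae_pos_pi_gammaMeasure (ha : ∀ i, 0 < a i) {r : ℝ} (hr : 0 < r) :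
    ∀ᵐ x ∂Measure.pi fun i ↦ gammaMeasure (a i) r, ∀ i, 0 < x i := by
  have := fun i ↦ isProbabilityMeasure_gammaMeasure (ha i) hr
  exact ae_all_iff.2 fun i ↦
    (measurePreserving_eval _ i).quasiMeasurePreserving.ae (ae_pos_gammaMeasure (a i) r)

lemma ae_mem_Icc_dirichletMeasure (ha : ∀ i, 0 < a i) (k : ι) :
    ∀ᵐ x ∂dirichletMeasure a, x k ∈ Icc 0 1 := by
  rw [dirichletMeasure,
    ae_map_iff (by fun_prop) (measurableSet_Icc.preimage (measurable_pi_apply k))]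
  filter_upwards [ae_pos_pi_gammaMeasure ha one_pos] with x hx
  have hle : x k ≤ ∑ j, x j := Finset.single_le_sum (fun i _ ↦ (hx i).le) (Finset.mem_univ k)
  exact ⟨div_nonneg (hx k).le ((hx k).le.trans hle), div_le_one_of_le₀ hle ((hx k).le.trans hle)⟩

lemma lintegral_prod_rpow_dirichletMeasure [Nonempty ι] {s : ι → ℝ} (ha : ∀ i, 0 < a i)
    (has : ∀ i, 0 < a i + s i) :
    ∫⁻ x, ENNReal.ofReal (∏ i, x i ^ s i) ∂dirichletMeasure a =
      ENNReal.ofReal ((∏ i, Real.Gamma (a i + s i) / Real.Gamma (a i)) *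
        (Real.Gamma (∑ i, a i) / Real.Gamma (∑ i, (a i + s i)))) := by
  have hΓ (i : ι) : 0 ≤ Real.Gamma (a i + s i) / Real.Gamma (a i) :=
    div_nonneg (Real.Gamma_nonneg_of_nonneg (has i).le) (Real.Gamma_nonneg_of_nonneg (ha i).le)
  have hsum : 0 < ∑ i, a i := Finset.sum_pos (fun i _ ↦ ha i) Finset.univ_nonempty
  have hsum' : 0 < ∑ i, (a i + s i) := Finset.sum_pos (fun i _ ↦ has i) Finset.univ_nonempty
  have hcancel : ∑ i, (a i + s i) + -∑ i, s i = ∑ i, a i := by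
    rw [Finset.sum_add_distrib, add_neg_cancel_right]
  calc ∫⁻ x, ENNReal.ofReal (∏ i, x i ^ s i) ∂dirichletMeasure a
    _ = ∫⁻ x, ENNReal.ofReal (∏ i, (x i / ∑ j, x j) ^ s i)
          ∂Measure.pi fun i ↦ gammaMeasure (a i) 1 :=
        lintegral_map (by fun_prop) (by fun_prop)
    _ = ∫⁻ x, (∏ i, ENNReal.ofReal (x i ^ s i)) * ENNReal.ofReal ((∑ i, x i) ^ (-∑ i, s i))
          ∂Measure.pi fun i ↦ gammaMeasure (a i) 1 := by
        refine lintegral_congr_ae ?_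
        filter_upwards [ae_pos_pi_gammaMeasure ha one_pos] with x hx
        have hS : 0 < ∑ i, x i := Finset.sum_pos (fun i _ ↦ hx i) Finset.univ_nonempty
        have hxs (i : ι) : 0 ≤ x i ^ s i := Real.rpow_nonneg (hx i).le _
        rw [← ENNReal.ofReal_prod_of_nonneg fun i _ ↦ hxs i,
          ← ENNReal.ofReal_mul (Finset.prod_nonneg fun i _ ↦ hxs i), Real.rpow_neg hS.le,
          Real.rpow_sum_of_pos hS, ← div_eq_mul_inv, ← Finset.prod_div_distrib]
        simp_rw [Real.div_rpow (hx _).le hS.le]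
    _ = (∏ i, ENNReal.ofReal (Real.Gamma (a i + s i) / Real.Gamma (a i))) *
          ∫⁻ u, ENNReal.ofReal (u ^ (-∑ i, s i)) ∂gammaMeasure (∑ i, (a i + s i)) 1 := by
        simpa using lintegral_prod_rpow_mul_comp_sum_pi_gammaMeasure ha has one_pos
          (f := fun u ↦ ENNReal.ofReal (u ^ (-∑ i, s i))) (by fun_prop)
    _ = _ := by
        rw [lintegral_rpow_gammaMeasure hsum' (by rwa [hcancel]) one_pos, hcancel, Real.one_rpow,
          mul_one, ← ENNReal.ofReal_prod_of_nonneg fun i _ ↦ hΓ i,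
          ← ENNReal.ofReal_mul (Finset.prod_nonneg fun i _ ↦ hΓ i)]

lemma integral_prod_rpow_dirichletMeasure [Nonempty ι] {s : ι → ℝ} (ha : ∀ i, 0 < a i)
    (has : ∀ i, 0 < a i + s i) :
    ∫ x, ∏ i, x i ^ s i ∂dirichletMeasure a =
      (∏ i, Real.Gamma (a i + s i) / Real.Gamma (a i)) *
        (Real.Gamma (∑ i, a i) / Real.Gamma (∑ i, (a i + s i))) := by
  have hΓ {b : ι → ℝ} (hb : ∀ i, 0 < b i) : 0 ≤ Real.Gamma (∑ i, b i) :=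
    Real.Gamma_nonneg_of_nonneg (Finset.sum_nonneg fun i _ ↦ (hb i).le)
  have hmoment_nonneg : 0 ≤ (∏ i, Real.Gamma (a i + s i) / Real.Gamma (a i)) *
      (Real.Gamma (∑ i, a i) / Real.Gamma (∑ i, (a i + s i))) :=
    mul_nonneg (Finset.prod_nonneg fun i _ ↦ div_nonneg (Real.Gamma_nonneg_of_nonneg (has i).le)
      (Real.Gamma_nonneg_of_nonneg (ha i).le)) (div_nonneg (hΓ ha) (hΓ has))
  rw [integral_eq_lintegral_of_nonneg_ae _ (Measurable.aestronglyMeasurable (by fun_prop)),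
    lintegral_prod_rpow_dirichletMeasure ha has, ENNReal.toReal_ofReal hmoment_nonneg]
  filter_upwards [ae_all_iff.2 (ae_mem_Icc_dirichletMeasure ha)] with x hx
  exact Finset.prod_nonneg fun i _ ↦ Real.rpow_nonneg (hx i).1 _

lemma integral_rpow_dirichletMeasure (ha : ∀ i, 0 < a i) (k : ι) {s : ℝ} (hs : 0 < a k + s) :
    ∫ x, x k ^ s ∂dirichletMeasure a =
      Real.Gamma (a k + s) / Real.Gamma (a k) *
        (Real.Gamma (∑ i, a i) / Real.Gamma (∑ i, a i + s)) := by
  classical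
  have : Nonempty ι := ⟨k⟩
  have has (i : ι) : 0 < a i + Pi.single (M := fun _ ↦ ℝ) k s i := by
    rcases eq_or_ne i k with rfl | hik
    · simpa using hs
    · simpa [hik] using ha i
  have hpow (x : ι → ℝ) : ∏ i, x i ^ Pi.single (M := fun _ ↦ ℝ) k s i = x k ^ s := by
    rw [Fintype.prod_eq_single k fun i hik ↦ by simp [hik], Pi.single_eq_same]
  have hΓ : ∏ i, Real.Gamma (a i + Pi.single (M := fun _ ↦ ℝ) k s i) / Real.Gamma (a i) =
      Real.Gamma (a k + s) / Real.Gamma (a k) := by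
    rw [Fintype.prod_eq_single k fun i hik ↦ by
      simp [hik, (Real.Gamma_pos_of_pos (ha i)).ne'], Pi.single_eq_same]
  simpa [hpow, hΓ, Finset.sum_add_distrib] using integral_prod_rpow_dirichletMeasure ha has

lemma integral_eval_dirichletMeasure (ha : ∀ i, 0 < a i) (k : ι) :
    ∫ x, x k ∂dirichletMeasure a = a k / ∑ i, a i := by
  have hk := ha k
  have hsum : 0 < ∑ i, a i := Finset.sum_pos (fun i _ ↦ ha i) ⟨k, Finset.mem_univ k⟩
  have := Real.Gamma_pos_of_pos hk
  have := Real.Gamma_pos_of_pos hsum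
  have hmoment := integral_rpow_dirichletMeasure ha k (add_pos hk one_pos)
  simp only [Real.rpow_one, Real.Gamma_add_one hk.ne', Real.Gamma_add_one hsum.ne'] at hmoment
  rw [hmoment]
  field_simp

lemma integral_eval_sq_dirichletMeasure (ha : ∀ i, 0 < a i) (k : ι) :
    ∫ x, x k ^ 2 ∂dirichletMeasure a =
      a k * (a k + 1) / ((∑ i, a i) * (∑ i, a i + 1)) := by
  have hk := ha k
  have hsum : 0 < ∑ i, a i := Finset.sum_pos (fun i _ ↦ ha i) ⟨k, Finset.mem_univ k⟩
  have := Real.Gamma_pos_of_pos hk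
  have := Real.Gamma_pos_of_pos hsum
  have hΓ_add_two {b : ℝ} (hb : 0 < b) : Real.Gamma (b + 2) = (b + 1) * (b * Real.Gamma b) := by
    rw [← one_add_one_eq_two, ← add_assoc, Real.Gamma_add_one (by positivity),
      Real.Gamma_add_one hb.ne']
  have hmoment := integral_rpow_dirichletMeasure ha k (add_pos hk two_pos)
  simp only [Real.rpow_two, hΓ_add_two hk, hΓ_add_two hsum] at hmoment
  rw [hmoment]
  field_simp

lemma memLp_eval_dirichletMeasure (ha : ∀ i, 0 < a i) (k : ι) (q : ℝ≥0∞) :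
    MemLp (fun x ↦ x k) q (dirichletMeasure a) :=
  have := isProbabilityMeasure_dirichletMeasure ha
  memLp_of_bounded (ae_mem_Icc_dirichletMeasure ha k)
    (measurable_pi_apply k).aestronglyMeasurable q

lemma variance_eval_dirichletMeasure (ha : ∀ i, 0 < a i) (k : ι) :
    Var[fun x ↦ x k; dirichletMeasure a] =
      a k / (∑ i, a i) * (1 - a k / ∑ i, a i) / (∑ i, a i + 1) := by
  have hsum : 0 < ∑ i, a i := Finset.sum_pos (fun i _ ↦ ha i) ⟨k, Finset.mem_univ k⟩
  have := isProbabilityMeasure_dirichletMeasure ha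
  rw [variance_eq_sub (memLp_eval_dirichletMeasure ha k 2), integral_eval_dirichletMeasure ha k]
  simp only [Pi.pow_apply, integral_eval_sq_dirichletMeasure ha k]
  field_simp
  ring

end Dirichlet

lemma integral_const_sub_sq {Ω : Type*} {mΩ : MeasurableSpace Ω} {μ : Measure Ω}
    [IsProbabilityMeasure μ] {X : Ω → ℝ} (hX : MemLp X 2 μ) (c : ℝ) :
    ∫ ω, (c - X ω) ^ 2 ∂μ = (c - ∫ ω, X ω ∂μ) ^ 2 + Var[X; μ] := by
  have hmean : ∫ ω, (c - X ω) ∂μ = c - ∫ ω, X ω ∂μ := by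
    rw [integral_sub (integrable_const c) (hX.integrable one_le_two), integral_const,
      probReal_univ, one_smul]
  have hvar := variance_eq_sub ((memLp_const c).sub hX)
  simp only [Pi.sub_def, Pi.pow_def, hmean, variance_const_sub hX.aestronglyMeasurable] at hvar
  rw [hvar, add_sub_cancel]

theorem dirichlet_expected_mse_general {ι : Type*} [Fintype ι] {Ω : Type*}
    {mΩ : MeasurableSpace Ω} {μ : Measure Ω} {a : ι → ℝ} (ha : ∀ i, 0 < a i) {π : Ω → ι → ℝ}
    (hπ : HasLaw π (dirichletMeasure a) μ) (y : ι → ℝ) :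
    ∫ ω, ∑ k, (y k - π ω k) ^ 2 ∂μ =
      ∑ k, (y k - a k / ∑ i, a i) ^ 2 +
        ∑ k, a k / (∑ i, a i) * (1 - a k / ∑ i, a i) / (∑ i, a i + 1) := by
  have := isProbabilityMeasure_dirichletMeasure ha
  have hint (k : ι) : Integrable (fun x ↦ (y k - x k) ^ 2) (dirichletMeasure a) :=
    ((memLp_const (y k)).sub (memLp_eval_dirichletMeasure ha k 2)).integrable_sq
  calc ∫ ω, ∑ k, (y k - π ω k) ^ 2 ∂μ
    _ = ∫ x, ∑ k, (y k - x k) ^ 2 ∂dirichletMeasure a :=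
        hπ.integral_comp (f := fun x ↦ ∑ k, (y k - x k) ^ 2)
          (Measurable.aestronglyMeasurable (by fun_prop))
    _ = ∑ k, ∫ x, (y k - x k) ^ 2 ∂dirichletMeasure a := integral_finsetSum _ fun k _ ↦ hint k
    _ = _ := by
        simp_rw [integral_const_sub_sq (memLp_eval_dirichletMeasure ha _ 2),
          integral_eval_dirichletMeasure ha, variance_eval_dirichletMeasure ha]
        exact Finset.sum_add_distrib

/-- **Dirichlet-expected mean-squared-error loss.**
Let `π` be a Dirichlet(α)-distributed random vector, realized as
`π_i = G_i / (G_1 + ⋯ + G_K)` where the `G_i` are independent Gamma(α_i, 1)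
random variables, let `p = α/α₀`, and let `y ∈ {0,1}^K` be one-hot.  Then
`𝔼[Σ_k (y_k − π_k)²] = Σ_k (y_k − p_k)² + Σ_k p_k(1 − p_k)/(α₀ + 1)`. -/
theorem dirichlet_expected_mse {K : ℕ} (hK : 0 < K)
    {Ω : Type*} [MeasurableSpace Ω] (μ : Measure Ω) [IsProbabilityMeasure μ]
    (α : Fin K → ℝ) (hα : ∀ i, 0 < α i)
    (G : Fin K → Ω → ℝ) (hGmeas : ∀ i, Measurable (G i))
    (hGindep : iIndepFun G μ)
    (hGlaw : ∀ i, μ.map (G i) = gammaMeasure (α i) 1)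
    (π : Ω → EuclideanSpace ℝ (Fin K))
    (hπ : ∀ ω i, π ω i = G i ω / ∑ j, G j ω)
    (α₀ : ℝ) (hα₀ : α₀ = ∑ j, α j)
    (p : Fin K → ℝ) (hp : ∀ i, p i = α i / α₀)
    (y : Fin K → ℝ) (hy01 : ∀ k, y k = 0 ∨ y k = 1) (hy1 : ∑ k, y k = 1) :
    ∫ ω, ∑ k, (y k - π ω k) ^ 2 ∂μ =
      ∑ k, (y k - p k) ^ 2 + ∑ k, p k * (1 - p k) / (α₀ + 1) := by
  obtain rfl : p = fun i ↦ α i / α₀ := funext hp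
  subst hα₀
  simpa only [hπ] using dirichlet_expected_mse_general hα
    (hasLaw_dirichletMeasure (fun i ↦ ⟨(hGmeas i).aemeasurable, hGlaw i⟩) hGindep) y
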